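/- arXiv:0912.3568 — 2 statements merged into one kernel-verified Lean document; each statement's English description precedes it below -/
import Mathlib

section
/- Let g : ℝ → ℝ be bounded and measurable and let f : ℝ → ℝ be measurable with c·χ_I(x) ≤ f(x) ≤ C·χ_{[−1,0]}(x) for all x, for some constants 0 < c ≤ C < ∞ and some nontrivial subinterval I of [−1, 0]. Fix α ∈ ℝ, and for each λ ∈ ℝ let (u(·,λ), v(·,λ)) be the solution of −u″ + (g + λ·f)·u = 0 with u(0,λ) = sin α and v(0,λ) = cos α; let R : ℝ×ℝ → (0,∞) and φ : ℝ×ℝ → ℝ satisfy u(x,λ) = R(x,λ)·sin(φ(x,λ)), v(x,λ) = R(x,λ)·cos(φ(x,λ)) and φ(0,λ) = α for all x, λ, with φ jointly continuous. Then λ ↦ φ(−1,λ) is differentiable on ℝ with derivative R(−1,λ)^{−2}·∫_{−1}^0 f(t)·u(t,λ)² dt, which is strictly positive; in particular λ ↦ φ(−1,λ) is strictly increasing on ℝ. -/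
open MeasureTheory

lemma pp_parts (U V P Q : ℝ → ℝ) (hP : ∀ x y, IntervalIntegrable P volume x y)
    (hQ : ∀ x y, IntervalIntegrable Q volume x y)
    (hU : ∀ x, U x = U 0 + ∫ t in (0:ℝ)..x, P t)
    (hV : ∀ x, V x = V 0 + ∫ t in (0:ℝ)..x, Q t) :
    ∫ t in (-1:ℝ)..0, (P t * V t + U t * Q t) = U 0 * V 0 - U (-1) * V (-1) := by
  have key : ∀ (W S : ℝ → ℝ), (∀ x y, IntervalIntegrable S volume x y) →
      (∀ x, W x = W 0 + ∫ t in (0:ℝ)..x, S t) →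
      AbsolutelyContinuousOnInterval W (-1) 0 ∧
      ∀ᵐ x, x ∈ Set.uIcc (-1:ℝ) 0 → HasDerivAt W (S x) x := by
    intro W S hS hW
    have hW' : W = fun x => W 0 + ∫ t in (0:ℝ)..x, S t := funext hW
    constructor
    · have h1 := (hS (-1) 0).absolutelyContinuousOnInterval_intervalIntegral (c := 0) (by simp)
      have h2 : AbsolutelyContinuousOnInterval (fun _ : ℝ => W 0) (-1) 0 :=
        ((LipschitzWith.const (W 0)).lipschitzOnWith).absolutelyContinuousOnInterval
      rw [hW']
      exact h2.fun_add h1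
    · filter_upwards [(hS (-1) 0).ae_hasDerivAt_integral] with x hx hx'
      rw [hW']
      exact (hx hx' 0 (by simp)).const_add _
  obtain ⟨hU1, hU2⟩ := key U P hP hU
  obtain ⟨hV1, hV2⟩ := key V Q hQ hV
  rw [← hU1.integral_deriv_mul_eq_sub hV1]
  apply intervalIntegral.integral_congr_ae
  filter_upwards [hU2, hV2] with x h1 h2 h3
  rw [(h1 (Set.uIoc_subset_uIcc h3)).deriv, (h2 (Set.uIoc_subset_uIcc h3)).deriv]

lemma pp_gronwall (N : ℝ → ℝ) (hN : Continuous N) (ε K : ℝ) (hε : 0 ≤ ε) (hK : 0 ≤ K)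
    (h : ∀ x ∈ Set.Icc (-1:ℝ) 0, N x ≤ ε + K * ∫ t in x..0, N t) :
    ∀ x ∈ Set.Icc (-1:ℝ) 0, N x ≤ ε * Real.exp K := by
  have hd : ∀ x, HasDerivAt (fun x => Real.exp (K * x) * (ε + K * ∫ t in x..0, N t))
      (Real.exp (K * x) * K * (ε + K * ∫ t in x..0, N t) + Real.exp (K * x) * (K * (- N x))) x := by
    intro x
    have h1 : HasDerivAt (fun x => ∫ t in x..0, N t) (- N x) x :=
      intervalIntegral.integral_hasDerivAt_left (hN.intervalIntegrable _ _)
        hN.stronglyMeasurable.stronglyMeasurableAtFilter hN.continuousAt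
    have h2 : HasDerivAt (fun x => Real.exp (K * x)) (Real.exp (K * x) * K) x := by
      simpa using ((hasDerivAt_id x).const_mul K).exp
    exact h2.mul ((h1.const_mul K).const_add ε)
  have hm : MonotoneOn (fun x => Real.exp (K * x) * (ε + K * ∫ t in x..0, N t))
      (Set.Icc (-1:ℝ) 0) := by
    refine monotoneOn_of_deriv_nonneg (convex_Icc _ _)
      (fun x _ => (hd x).continuousAt.continuousWithinAt)
      (fun x _ => (hd x).differentiableAt.differentiableWithinAt) ?_
    intro x hx
    rw [interior_Icc] at hx
    rw [(hd x).deriv]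
    have := h x (Set.Ioo_subset_Icc_self hx)
    have e : Real.exp (K * x) * K * (ε + K * ∫ t in x..0, N t) + Real.exp (K * x) * (K * (- N x))
      = Real.exp (K * x) * K * ((ε + K * ∫ t in x..0, N t) - N x) := by ring
    rw [e]
    exact mul_nonneg (mul_nonneg (Real.exp_pos _).le hK) (by linarith)
  intro x hx
  have h3 := hm hx (Set.right_mem_Icc.2 (by norm_num)) hx.2
  simp only [mul_zero, Real.exp_zero, one_mul, intervalIntegral.integral_same, add_zero] at h3
  have h4 := h x hx
  have h5 : ε + K * ∫ t in x..0, N t ≤ ε * Real.exp (-(K * x)) := by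
    have := mul_le_mul_of_nonneg_left h3 (Real.exp_pos (-(K*x))).le
    rw [← mul_assoc, ← Real.exp_add] at this
    simp only [neg_add_cancel, Real.exp_zero, one_mul] at this
    linarith
  have h6 : Real.exp (-(K * x)) ≤ Real.exp K := by
    apply Real.exp_le_exp.2
    nlinarith [hx.1]
  exact h4.trans (h5.trans (mul_le_mul_of_nonneg_left h6 hε))

/-- The Prüfer phase at `-1` is differentiable in the coupling constant with strictly
positive derivative `R(-1,λ)⁻² ∫_{-1}^0 f u(·,λ)²`; in particular it is strictly
increasing in `λ`. -/
theorem prufer_phase_strict_mono_coupling (g f : ℝ → ℝ)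
    (hgm : Measurable g) (hgb : ∃ Cg : ℝ, ∀ x : ℝ, |g x| ≤ Cg)
    (hfm : Measurable f) (c C : ℝ) (hc : 0 < c) (hcC : c ≤ C)
    (a b : ℝ) (ha : -1 ≤ a) (hab : a < b) (hb : b ≤ 0)
    (hfl : ∀ x : ℝ, Set.indicator (Set.Icc a b) (fun _ => c) x ≤ f x)
    (hfu : ∀ x : ℝ, f x ≤ Set.indicator (Set.Icc (-1 : ℝ) 0) (fun _ => C) x)
    (α : ℝ) (u v R φ : ℝ → ℝ → ℝ)
    (hu : ∀ (lam : ℝ) (x : ℝ), HasDerivAt (fun s => u s lam) (v x lam) x)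
    (hv : ∀ (lam : ℝ) (x y : ℝ),
      v x lam = v y lam + ∫ t in y..x, (g t + lam * f t) * u t lam)
    (hu0 : ∀ lam : ℝ, u 0 lam = Real.sin α)
    (hv0 : ∀ lam : ℝ, v 0 lam = Real.cos α)
    (hR : ∀ x lam : ℝ, 0 < R x lam)
    (huR : ∀ x lam : ℝ, u x lam = R x lam * Real.sin (φ x lam))
    (hvR : ∀ x lam : ℝ, v x lam = R x lam * Real.cos (φ x lam))
    (hφ0 : ∀ lam : ℝ, φ 0 lam = α)
    (hφcont : Continuous fun p : ℝ × ℝ => φ p.1 p.2) :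
    (∀ lam : ℝ,
      HasDerivAt (fun l => φ (-1) l)
        ((R (-1) lam ^ 2)⁻¹ * ∫ t in (-1 : ℝ)..0, f t * u t lam ^ 2) lam ∧
      0 < (R (-1) lam ^ 2)⁻¹ * ∫ t in (-1 : ℝ)..0, f t * u t lam ^ 2) ∧
    StrictMono fun lam : ℝ => φ (-1) lam := by
  obtain ⟨Cg, hCg⟩ := hgb
  have hCg0 : 0 ≤ Cg := (abs_nonneg _).trans (hCg 0)
  have hC0 : 0 < C := hc.trans_le hcC
  have hf0 : ∀ x, 0 ≤ f x := fun x =>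
    (Set.indicator_nonneg (fun _ _ => hc.le) x).trans (hfl x)
  have hfC : ∀ x, f x ≤ C := fun x =>
    (hfu x).trans (Set.indicator_le_self' (fun _ _ => hC0.le) x)
  have hfabs : ∀ x, |f x| ≤ C := fun x => by rw [abs_of_nonneg (hf0 x)]; exact hfC x
  have huc : ∀ lam, Continuous fun x => u x lam := fun lam =>
    continuous_iff_continuousAt.2 fun x => (hu lam x).continuousAt
  have hbi : ∀ (F : ℝ → ℝ) (B : ℝ), Measurable F → (∀ x, |F x| ≤ B) → ∀ x y,
      IntervalIntegrable F volume x y := by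
    intro F B hF hB x y
    refine (intervalIntegrable_const (c := B)).mono_fun hF.aestronglyMeasurable ?_
    exact Filter.Eventually.of_forall fun t => (hB t).trans (le_abs_self B)
  have hfi : ∀ x y, IntervalIntegrable f volume x y := hbi f C hfm hfabs
  have hgi : ∀ x y, IntervalIntegrable g volume x y := hbi g Cg hgm hCg
  have hqi : ∀ lam x y, IntervalIntegrable (fun t => g t + lam * f t) volume x y :=
    fun lam x y => (hgi x y).add ((hfi x y).const_mul lam)
  have hqui : ∀ lam mu x y, IntervalIntegrable (fun t => (g t + lam * f t) * u t mu) volume x y :=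
    fun lam mu x y => (hqi lam x y).mul_continuousOn (huc mu).continuousOn
  have hvc : ∀ lam, Continuous fun x => v x lam := by
    intro lam
    have : (fun x => v x lam) = fun x => v 0 lam + ∫ t in (0:ℝ)..x, (g t + lam * f t) * u t lam :=
      funext fun x => hv lam x 0
    rw [this]
    exact continuous_const.add (intervalIntegral.continuous_primitive (hqui lam lam) 0)
  have huI : ∀ lam x y, u x lam = u y lam + ∫ t in y..x, v t lam := by
    intro lam x y
    rw [intervalIntegral.integral_eq_sub_of_hasDerivAt (fun t _ => hu lam t)
      ((hvc lam).intervalIntegrable _ _)]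
    ring
  have hfuu : ∀ l m x y, IntervalIntegrable (fun t => f t * (u t l * u t m)) volume x y :=
    fun l m x y => (hfi x y).mul_continuousOn ((huc l).mul (huc m)).continuousOn
  -- Wronskian
  have hW : ∀ l m, R (-1) l * R (-1) m * Real.sin (φ (-1) m - φ (-1) l)
      = (m - l) * ∫ t in (-1:ℝ)..0, f t * (u t l * u t m) := by
    intro l m
    have h1 := pp_parts (fun t => u t l) (fun t => v t m) (fun t => v t l)
      (fun t => (g t + m * f t) * u t m) (fun x y => (hvc l).intervalIntegrable _ _)
      (hqui m m) (fun x => huI l x 0) (fun x => hv m x 0)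
    have h2 := pp_parts (fun t => u t m) (fun t => v t l) (fun t => v t m)
      (fun t => (g t + l * f t) * u t l) (fun x y => (hvc m).intervalIntegrable _ _)
      (hqui l l) (fun x => huI m x 0) (fun x => hv l x 0)
    have i1 : ∀ l m, IntervalIntegrable (fun t => v t l * v t m +
        u t l * ((g t + m * f t) * u t m)) volume (-1) 0 := fun l m =>
      (((hvc l).mul (hvc m)).intervalIntegrable _ _).add
        ((hqui m m _ _).continuousOn_mul (huc l).continuousOn)
    have h3 := intervalIntegral.integral_sub (i1 l m) (i1 m l)
    rw [h1, h2] at h3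
    rw [← intervalIntegral.integral_const_mul]
    have h4 : (fun t => (m - l) * (f t * (u t l * u t m))) = fun t =>
      (v t l * v t m + u t l * ((g t + m * f t) * u t m)) -
      (v t m * v t l + u t m * ((g t + l * f t) * u t l)) := by
      funext t; ring
    rw [h4, h3, hu0, hu0, hv0, hv0, huR, huR, hvR, hvR, Real.sin_sub]
    ring
  -- Lipschitz continuity in the parameter
  have hL : ∀ l, ∃ M L : ℝ, 0 ≤ M ∧ 0 ≤ L ∧ (∀ x ∈ Set.Icc (-1:ℝ) 0, |u x l| ≤ M) ∧
      ∀ m, |m - l| ≤ 1 → ∀ x ∈ Set.Icc (-1:ℝ) 0,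
        |u x m - u x l| + |v x m - v x l| ≤ |m - l| * L := by
    intro l
    obtain ⟨M, hM⟩ := isCompact_Icc.exists_bound_of_continuousOn
      (s := Set.Icc (-1:ℝ) 0) (huc l).continuousOn
    have hM0 : 0 ≤ M := (norm_nonneg _).trans (hM 0 (by simp))
    set Q := Cg + (|l| + 1) * C with hQ
    have hQ0 : 0 ≤ Q := by positivity
    refine ⟨M, C * M * Real.exp (1 + Q), hM0, by positivity, hM, ?_⟩
    intro m hm
    have hNc : Continuous fun x => |u x m - u x l| + |v x m - v x l| :=
      ((huc m).sub (huc l)).abs.add ((hvc m).sub (hvc l)).abs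
    have := pp_gronwall (fun x => |u x m - u x l| + |v x m - v x l|) hNc
      (|m - l| * (C * M)) (1 + Q) (by positivity) (by positivity) ?_
    · intro x hx
      refine (this x hx).trans (le_of_eq (by ring))
    intro x hx
    have e1 : u x m - u x l = - ∫ t in x..0, (v t m - v t l) := by
      rw [intervalIntegral.integral_sub ((hvc m).intervalIntegrable _ _)
        ((hvc l).intervalIntegrable _ _)]
      have h1 := huI m 0 x
      have h2 := huI l 0 x
      rw [hu0] at h1 h2
      linarith
    have e2 : v x m - v x l = - ∫ t in x..0,
        ((g t + m * f t) * u t m - (g t + l * f t) * u t l) := by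
      rw [intervalIntegral.integral_sub (hqui m m _ _) (hqui l l _ _)]
      have h1 := hv m 0 x
      have h2 := hv l 0 x
      rw [hv0] at h1 h2
      linarith
    have hui : IntervalIntegrable (fun t => |u t m - u t l|) volume x 0 :=
      ((huc m).sub (huc l)).abs.intervalIntegrable _ _
    have hvi : IntervalIntegrable (fun t => |v t m - v t l|) volume x 0 :=
      ((hvc m).sub (hvc l)).abs.intervalIntegrable _ _
    have b1 : |u x m - u x l| ≤ ∫ t in x..0, |v t m - v t l| := by
      rw [e1, abs_neg]
      exact intervalIntegral.abs_integral_le_integral_abs hx.2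
    have b2 : |v x m - v x l| ≤ ∫ t in x..0, (Q * |u t m - u t l| + |m - l| * (C * M)) := by
      rw [e2, abs_neg, ← Real.norm_eq_abs]
      refine intervalIntegral.norm_integral_le_of_norm_le hx.2 ?_
        ((hui.const_mul Q).add intervalIntegrable_const)
      refine Filter.Eventually.of_forall fun t ht => ?_
      have htI : t ∈ Set.Icc (-1:ℝ) 0 := ⟨hx.1.trans ht.1.le, ht.2⟩
      have d : (g t + m * f t) * u t m - (g t + l * f t) * u t l
        = (g t + m * f t) * (u t m - u t l) + (m - l) * (f t * u t l) := by ring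
      rw [d, Real.norm_eq_abs]
      refine (abs_add_le _ _).trans ?_
      rw [abs_mul, abs_mul (m - l), abs_mul (f t)]
      have q1 : |g t + m * f t| ≤ Q := by
        refine (abs_add_le _ _).trans ?_
        rw [abs_mul]
        have : |m| ≤ |l| + 1 := by
          have := abs_add_le (m - l) l
          rw [sub_add_cancel] at this
          linarith
        exact add_le_add (hCg t) (mul_le_mul this (hfabs t) (abs_nonneg _) (by positivity))
      have q2 : |u t l| ≤ M := hM t htI
      gcongr
      exact hfabs t
    rw [intervalIntegral.integral_add (hui.const_mul Q) intervalIntegrable_const,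
      intervalIntegral.integral_const_mul, intervalIntegral.integral_const, smul_eq_mul] at b2
    rw [intervalIntegral.integral_add hui hvi]
    have p1 : 0 ≤ ∫ t in x..0, |u t m - u t l| :=
      intervalIntegral.integral_nonneg hx.2 fun t _ => abs_nonneg _
    have p2 : 0 ≤ ∫ t in x..0, |v t m - v t l| :=
      intervalIntegral.integral_nonneg hx.2 fun t _ => abs_nonneg _
    have p3 : (0 - x) * (|m - l| * (C * M)) ≤ 1 * (|m - l| * (C * M)) :=
      mul_le_mul_of_nonneg_right (by linarith [hx.1]) (by positivity)
    nlinarith [mul_nonneg hQ0 p2]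
  have hRsq : ∀ x l, R x l ^ 2 = u x l ^ 2 + v x l ^ 2 := by
    intro x l
    rw [huR, hvR]
    linear_combination (-(R x l)^2) * Real.sin_sq_add_cos_sq (φ x l)
  have hpos : ∀ lam, 0 < (R (-1) lam ^ 2)⁻¹ * ∫ t in (-1 : ℝ)..0, f t * u t lam ^ 2 := by
    intro l
    refine mul_pos (inv_pos.2 (pow_pos (hR _ _) 2)) ?_
    have hi : ∀ x y, IntervalIntegrable (fun t => f t * u t l ^ 2) volume x y :=
      fun x y => (hfi x y).mul_continuousOn ((huc l).pow 2).continuousOn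
    have s1 : ∫ t in a..b, f t * u t l ^ 2 ≤ ∫ t in (-1:ℝ)..0, f t * u t l ^ 2 :=
      intervalIntegral.integral_mono_interval ha hab.le hb
        (Filter.Eventually.of_forall fun t => mul_nonneg (hf0 t) (sq_nonneg _)) (hi _ _)
    have hci : Continuous fun t => c * u t l ^ 2 := continuous_const.mul ((huc l).pow 2)
    have s2 : ∫ t in a..b, c * u t l ^ 2 ≤ ∫ t in a..b, f t * u t l ^ 2 := by
      refine intervalIntegral.integral_mono_on hab.le (hci.intervalIntegrable _ _) (hi _ _) ?_
      intro t ht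
      have := hfl t
      rw [Set.indicator_of_mem ht] at this
      exact mul_le_mul_of_nonneg_right this (sq_nonneg _)
    refine lt_of_lt_of_le ?_ (s2.trans s1)
    have hex : ∃ t ∈ Set.Ioo a b, u t l ≠ 0 := by
      by_contra! hne
      have ht : (a + b) / 2 ∈ Set.Ioo a b := ⟨by linarith, by linarith⟩
      have h0 : HasDerivAt (fun s => u s l) 0 ((a + b) / 2) := by
        refine (hasDerivAt_const _ (0:ℝ)).congr_of_eventuallyEq ?_
        filter_upwards [isOpen_Ioo.mem_nhds ht] with s hs using hne s hs
      have h1 := (hu l _).unique h0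
      have h2 := hRsq ((a + b) / 2) l
      rw [h1, hne _ ht] at h2
      have := pow_pos (hR ((a + b) / 2) l) 2
      simp at h2
      rw [h2] at this
      simp at this
    obtain ⟨t, ht, hne⟩ := hex
    exact intervalIntegral.integral_pos hab hci.continuousOn
      (fun x _ => by positivity) ⟨t, Set.Ioo_subset_Icc_self ht, by positivity⟩
  have hder : ∀ lam, HasDerivAt (fun l => φ (-1) l)
        ((R (-1) lam ^ 2)⁻¹ * ∫ t in (-1 : ℝ)..0, f t * u t lam ^ 2) lam := by
    intro l
    obtain ⟨M, L, hM0, hL0, hM, hLip⟩ := hL l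
    have hnear : ∀ᶠ m in nhds l, |m - l| ≤ 1 := by
      filter_upwards [Metric.closedBall_mem_nhds l one_pos] with m hm
      simpa [Real.dist_eq] using hm
    have ht0 : ∀ B : ℝ, Filter.Tendsto (fun m => |m - l| * B) (nhds l) (nhds 0) := by
      intro B
      have : Continuous fun m => |m - l| * B := by fun_prop
      simpa using this.tendsto l
    have hx1 : (-1:ℝ) ∈ Set.Icc (-1:ℝ) 0 := by simp
    have cu : ContinuousAt (fun m => u (-1) m) l := by
      refine tendsto_iff_norm_sub_tendsto_zero.2 ?_
      refine squeeze_zero' (Filter.Eventually.of_forall fun _ => norm_nonneg _) ?_ (ht0 L)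
      filter_upwards [hnear] with m hm
      have := hLip m hm _ hx1
      rw [Real.norm_eq_abs]
      linarith [abs_nonneg (v (-1) m - v (-1) l)]
    have cv : ContinuousAt (fun m => v (-1) m) l := by
      refine tendsto_iff_norm_sub_tendsto_zero.2 ?_
      refine squeeze_zero' (Filter.Eventually.of_forall fun _ => norm_nonneg _) ?_ (ht0 L)
      filter_upwards [hnear] with m hm
      have := hLip m hm _ hx1
      rw [Real.norm_eq_abs]
      linarith [abs_nonneg (u (-1) m - u (-1) l)]
    have cR : ContinuousAt (fun m => R (-1) m) l := by
      have : (fun m => R (-1) m) = fun m => Real.sqrt (u (-1) m ^ 2 + v (-1) m ^ 2) := by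
        funext m
        rw [← hRsq, Real.sqrt_sq (hR _ _).le]
      rw [this]
      exact ((cu.pow 2).add (cv.pow 2)).sqrt
    have cJ : ContinuousAt (fun m => ∫ t in (-1:ℝ)..0, f t * (u t l * u t m)) l := by
      refine tendsto_iff_norm_sub_tendsto_zero.2 ?_
      refine squeeze_zero' (Filter.Eventually.of_forall fun _ => norm_nonneg _) ?_
        (ht0 (C * (M * L)))
      filter_upwards [hnear] with m hm
      rw [← intervalIntegral.integral_sub (hfuu l m _ _) (hfuu l l _ _)]
      have := intervalIntegral.norm_integral_le_of_norm_le_const (a := (-1:ℝ)) (b := 0)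
        (f := fun t => f t * (u t l * u t m) - f t * (u t l * u t l))
        (C := |m - l| * (C * (M * L))) ?_
      · simpa using this
      intro t ht
      rw [Set.uIoc_of_le (by norm_num)] at ht
      have htI : t ∈ Set.Icc (-1:ℝ) 0 := Set.Ioc_subset_Icc_self ht
      have e : f t * (u t l * u t m) - f t * (u t l * u t l)
        = f t * (u t l * (u t m - u t l)) := by ring
      rw [e, Real.norm_eq_abs, abs_mul, abs_mul]
      have h1 : |u t m - u t l| ≤ |m - l| * L := by
        linarith [hLip m hm t htI, abs_nonneg (v t m - v t l)]
      calc _ ≤ C * (M * (|m - l| * L)) := by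
            gcongr
            · exact hfabs t
            · exact hM t htI
        _ = _ := by ring
    have hRl := (hR (-1) l).ne'
    have cK : ContinuousAt (fun m => (∫ t in (-1:ℝ)..0, f t * (u t l * u t m)) /
        (R (-1) l * R (-1) m)) l :=
      cJ.div (continuousAt_const.mul cR) (mul_ne_zero hRl hRl)
    have dS : HasDerivAt (fun m => Real.sin (φ (-1) m - φ (-1) l))
        ((∫ t in (-1:ℝ)..0, f t * (u t l * u t l)) / (R (-1) l * R (-1) l)) l := by
      rw [hasDerivAt_iff_tendsto_slope]
      refine (cK.tendsto.mono_left nhdsWithin_le_nhds).congr' ?_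
      filter_upwards [self_mem_nhdsWithin] with m hm
      have hm' : m - l ≠ 0 := sub_ne_zero.2 hm
      have hRm := (hR (-1) m).ne'
      rw [slope_def_field]
      simp only [sub_self, Real.sin_zero, sub_zero]
      rw [div_eq_div_iff (mul_ne_zero hRl hRm) hm']
      linear_combination - hW l m
    have cφ : Continuous fun m => φ (-1) m - φ (-1) l :=
      (hφcont.comp (continuous_const.prodMk continuous_id)).sub continuous_const
    have hsmall : ∀ᶠ m in nhds l, φ (-1) m - φ (-1) l ∈ Set.Ioo (-(Real.pi/2)) (Real.pi/2) := by
      refine cφ.continuousAt.eventually_mem (isOpen_Ioo.mem_nhds ?_)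
      simp [Real.pi_pos]
    have dA : HasDerivAt Real.arcsin (1 / Real.sqrt (1 - 0 ^ 2))
        (Real.sin (φ (-1) l - φ (-1) l)) := by
      have := Real.hasDerivAt_arcsin (x := 0) (by norm_num) (by norm_num)
      simpa using this
    have dC := (dA.comp l dS).const_add (φ (-1) l)
    have dD := dC.congr_of_eventuallyEq (f₁ := fun l => φ (-1) l) (by
      filter_upwards [hsmall] with m hm
      simp only [Function.comp]
      rw [Real.arcsin_sin hm.1.le hm.2.le]
      ring)
    have hval : (R (-1) l ^ 2)⁻¹ * ∫ t in (-1 : ℝ)..0, f t * u t l ^ 2 =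
        1 / Real.sqrt (1 - 0 ^ 2) *
        ((∫ t in (-1:ℝ)..0, f t * (u t l * u t l)) / (R (-1) l * R (-1) l)) := by
      simp only [pow_two]
      simp
      ring
    rw [hval]
    exact dD
  refine ⟨fun l => ⟨hder l, hpos l⟩, strictMono_of_deriv_pos fun l => ?_⟩
  rw [(hder l).deriv]
  exact hpos l
end

section
/- Let g : ℝ → ℝ be bounded and measurable and let f : ℝ → ℝ be measurable with c·χ_I(x) ≤ f(x) ≤ C·χ_{[−1,0]}(x) for all x, for some constants 0 < c ≤ C < ∞ and some nontrivial subinterval I of [−1, 0]. For each α, λ ∈ ℝ let (u(·,α,λ), v(·,α,λ)) be the solution of −u″ + (g + λ·f)·u = 0 with u(0,α,λ) = sin α and v(0,α,λ) = cos α; let R : ℝ×ℝ×ℝ → (0,∞) and φ : ℝ×ℝ×ℝ → ℝ satisfy u = R·sin(φ), v = R·cos(φ) and φ(0,α,λ) = α, with φ jointly continuous in (x,α,λ). Define D := { (β, α) ∈ ℝ² : φ(−1,α,λ) = β for some λ ∈ ℝ }. Then: (i) for every (β, α) ∈ D there is a unique λ(β,α) ∈ ℝ with φ(−1,α,λ(β,α))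 = β; (ii) D is an open subset of ℝ²; (iii) the map (β, α) ↦ λ(β,α) is continuous on D. -/
open MeasureTheory

lemma cc_gron (S : ℝ → ℝ) (hS : Continuous S) (K ε : ℝ) (hK : 0 < K)
    (h : ∀ x ∈ Set.Icc (0:ℝ) 1, S x ≤ ε + K * ∫ t in (0:ℝ)..x, S t) (hS0 : ∀ x, 0 ≤ S x) :
    ∀ x ∈ Set.Icc (0:ℝ) 1, S x ≤ ε * Real.exp (K * x) := by
  intro x hx
  have hd : ∀ y, HasDerivAt (fun y => ∫ t in (0:ℝ)..y, S t) (S y) y := fun y =>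
    (hS.integral_hasStrictDerivAt 0 y).hasDerivAt
  have hI0 : ∀ y ∈ Set.Icc (0:ℝ) 1, 0 ≤ ∫ t in (0:ℝ)..y, S t := fun y hy =>
    intervalIntegral.integral_nonneg hy.1 (fun t _ => hS0 t)
  have := norm_le_gronwallBound_of_norm_deriv_right_le (f := fun y => ∫ t in (0:ℝ)..y, S t)
    (f' := S) (δ := 0) (K := K) (ε := ε) (a := 0) (b := 1)
    (fun y _ => (hd y).continuousAt.continuousWithinAt) (fun y _ => (hd y).hasDerivWithinAt)
    (by simp) (fun y hy => by
      have hy' : y ∈ Set.Icc (0:ℝ) 1 := ⟨hy.1, hy.2.le⟩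
      rw [Real.norm_of_nonneg (hS0 y), Real.norm_of_nonneg (hI0 y hy')]
      linarith [h y hy']) x hx
  rw [Real.norm_of_nonneg (hI0 x hx), gronwallBound_of_K_ne_0 hK.ne', sub_zero] at this
  have h1 := h x hx
  have h2 := mul_le_mul_of_nonneg_left this hK.le
  have h3 : K * (0 * Real.exp (K * x) + ε / K * (Real.exp (K * x) - 1))
      = ε * (Real.exp (K * x) - 1) := by
    field_simp; ring
  rw [h3] at h2
  linarith

lemma cc_sol (w z h : ℝ → ℝ) (K ε : ℝ) (hK : 0 ≤ K) (hε : 0 ≤ ε)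
    (hw : ∀ x, HasDerivAt w (z x) x) (hzc : Continuous z) (hw0 : w 0 = 0)
    (hz : ∀ x, z x = ∫ t in (0:ℝ)..x, h t)
    (hh : ∀ t ∈ Set.Icc (-1:ℝ) 0, |h t| ≤ K * |w t| + ε) :
    ∀ x ∈ Set.Icc (-1:ℝ) 0, |w x| ≤ ε * Real.exp (K + 1) := by
  have hwc : Continuous w := continuous_iff_continuousAt.2 fun x => (hw x).continuousAt
  have key := cc_gron (fun x => |w (-x)| + |z (-x)|) (by fun_prop) (K + 1) ε (by linarith)
    (by
      intro x hx
      have e1 : |w (-x)| ≤ ∫ t in (0:ℝ)..x, |z (-t)| := by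
        have : ∫ t in (0:ℝ)..x, -z (-t) = w (-x) - w (-0) := by
          apply intervalIntegral.integral_eq_sub_of_hasDerivAt (f := fun t => w (-t))
          · intro t _
            have := (hw (-t)).comp t (hasDerivAt_neg t)
            simpa [Function.comp_def] using this
          · exact (by fun_prop : Continuous fun t => -z (-t)).intervalIntegrable _ _
        rw [neg_zero, hw0, sub_zero] at this
        rw [← this, ← Real.norm_eq_abs]
        refine intervalIntegral.norm_integral_le_of_norm_le (g := fun t => |z (-t)|) hx.1 ?_ ?_
        · filter_upwards with t _
          simp
        · exact (by fun_prop : Continuous fun t => |z (-t)|).intervalIntegrable _ _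
      have e2 : |z (-x)| ≤ ∫ t in (0:ℝ)..x, (K * |w (-t)| + ε) := by
        have : z (-x) = - ∫ t in (0:ℝ)..x, h (-t) := by
          rw [intervalIntegral.integral_comp_neg, neg_zero, hz, intervalIntegral.integral_symm]
        rw [this, abs_neg, ← Real.norm_eq_abs]
        refine intervalIntegral.norm_integral_le_of_norm_le hx.1 ?_ ?_
        · filter_upwards with t ht
          exact hh _ ⟨by linarith [ht.2, hx.2], by linarith [ht.1]⟩
        · exact (by fun_prop : Continuous fun t => K * |w (-t)| + ε).intervalIntegrable _ _
      have i1 : IntervalIntegrable (fun t => |w (-t)|) volume 0 x :=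
        (by fun_prop : Continuous fun t => |w (-t)|).intervalIntegrable _ _
      have i2 : IntervalIntegrable (fun t => |z (-t)|) volume 0 x :=
        (by fun_prop : Continuous fun t => |z (-t)|).intervalIntegrable _ _
      rw [intervalIntegral.integral_add (i1.const_mul K) (by simp),
        intervalIntegral.integral_const_mul] at e2
      simp only [intervalIntegral.integral_const, smul_eq_mul, sub_zero] at e2
      rw [intervalIntegral.integral_add i1 i2]
      have p1 : 0 ≤ ∫ t in (0:ℝ)..x, |w (-t)| :=
        intervalIntegral.integral_nonneg hx.1 (fun t _ => abs_nonneg _)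
      have p2 : 0 ≤ ∫ t in (0:ℝ)..x, |z (-t)| :=
        intervalIntegral.integral_nonneg hx.1 (fun t _ => abs_nonneg _)
      have p3 : x * ε ≤ ε := by nlinarith [hx.2]
      nlinarith [mul_nonneg hK p2])
    (fun x => by positivity)
  intro x hx
  have := key (-x) ⟨by linarith [hx.2], by linarith [hx.1]⟩
  simp only [neg_neg] at this
  have h2 : ε * Real.exp ((K+1) * -x) ≤ ε * Real.exp (K+1) := by
    gcongr
    nlinarith [hx.1]
  linarith [abs_nonneg (z x)]

lemma cc_ac (F h : ℝ → ℝ) (hh : LocallyIntegrable h volume)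
    (hF : ∀ x, F x = F 0 + ∫ t in (0:ℝ)..x, h t) :
    AbsolutelyContinuousOnInterval F (-1) 0 ∧ ∀ᵐ x, HasDerivAt F (h x) x := by
  have e : F = fun x => F 0 + ∫ t in (0:ℝ)..x, h t := funext hF
  constructor
  · rw [e]
    have h1 : AbsolutelyContinuousOnInterval (fun _ : ℝ => F 0) (-1) 0 :=
      (LipschitzWith.const (F 0)).lipschitzOnWith.absolutelyContinuousOnInterval
    have h2 := (intervalIntegrable_iff.mpr <|
      (hh.integrableOn_isCompact (isCompact_uIcc (a := (-1:ℝ)) (b := 0))).mono_set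
        Set.uIoc_subset_uIcc).absolutelyContinuousOnInterval_intervalIntegral
      (c := 0) (by simp)
    exact h1.add h2
  · filter_upwards [_root_.LocallyIntegrable.ae_hasDerivAt_integral hh] with x hx
    rw [e]
    exact (hx 0).const_add (F 0)

lemma cc_mono (G : ℝ → ℝ) (hG : Continuous G)
    (h : ∀ x, ∃ ε > 0, ∀ y, x < y → y < x + ε → G x < G y) : StrictMono G := by
  have hm : ∀ x y, x ≤ y → G x ≤ G y := by
    intro x y hxy
    have : Set.Icc x y ⊆ {t | G x ≤ G t} := by
      apply IsClosed.Icc_subset_of_forall_exists_gt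
      · exact (isClosed_le continuous_const hG).inter isClosed_Icc
      · simp
      · rintro s ⟨hs, -⟩ t (ht : s < t)
        obtain ⟨ε, h0, hε⟩ := h s
        refine ⟨min t (s + ε/2), le_trans hs (hε _ (lt_min ht (by linarith))
          ((min_le_right _ _).trans_lt (by linarith))).le, lt_min ht (by linarith), min_le_left _ _⟩
    exact this ⟨hxy, le_rfl⟩
  intro x y hxy
  obtain ⟨ε, h0, hε⟩ := h x
  exact (hε (min y (x + ε/2)) (lt_min hxy (by linarith))
    ((min_le_right _ _).trans_lt (by linarith))).trans_le (hm _ _ (min_le_left _ _))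

lemma cc_top (G : ℝ → ℝ → ℝ) (hG : Continuous fun p : ℝ × ℝ => G p.1 p.2)
    (hm : ∀ α, StrictMono (G α)) :
    (∀ p : ℝ × ℝ, p ∈ {p : ℝ × ℝ | ∃ lam : ℝ, G p.2 lam = p.1} →
      ∃! lam : ℝ, G p.2 lam = p.1) ∧
    IsOpen {p : ℝ × ℝ | ∃ lam : ℝ, G p.2 lam = p.1} ∧
    ∃ Λ : ℝ × ℝ → ℝ,
      ContinuousOn Λ {p : ℝ × ℝ | ∃ lam : ℝ, G p.2 lam = p.1} ∧
      ∀ p ∈ {p : ℝ × ℝ | ∃ lam : ℝ, G p.2 lam = p.1}, G p.2 (Λ p) = p.1 := by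
  have key : ∀ (p : ℝ × ℝ) (l : ℝ), G p.2 l = p.1 → ∀ ε > 0, ∀ᶠ q in nhds p,
      ∃ m, |m - l| < ε ∧ G q.2 m = q.1 := by
    intro p l hl ε hε
    have c1 : ∀ m, Continuous fun q : ℝ × ℝ => G q.2 m := fun m =>
      hG.comp (continuous_snd.prodMk continuous_const)
    have e1 : ∀ᶠ q in nhds p, G q.2 (l - ε/2) < q.1 :=
      (isOpen_lt (c1 _) continuous_fst).mem_nhds (by
        change G p.2 _ < p.1
        rw [← hl]; exact hm _ (by linarith))
    have e2 : ∀ᶠ q in nhds p, q.1 < G q.2 (l + ε/2) :=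
      (isOpen_lt continuous_fst (c1 _)).mem_nhds (by
        change p.1 < G p.2 _
        rw [← hl]; exact hm _ (by linarith))
    filter_upwards [e1, e2] with q h1 h2
    have cq : Continuous (G q.2) := hG.comp (continuous_const.prodMk continuous_id)
    obtain ⟨m, hm1, hm2⟩ := intermediate_value_Icc (by linarith : l - ε/2 ≤ l + ε/2)
      cq.continuousOn ⟨h1.le, h2.le⟩
    exact ⟨m, abs_lt.2 ⟨by linarith [hm1.1], by linarith [hm1.2]⟩, hm2⟩
  refine ⟨?_, ?_, ?_⟩
  · rintro p ⟨l, hl⟩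
    exact ⟨l, hl, fun m hm' => (hm p.2).injective (hm'.trans hl.symm)⟩
  · rw [isOpen_iff_mem_nhds]
    rintro p ⟨l, hl⟩
    filter_upwards [key p l hl 1 one_pos] with q ⟨m, _, hm⟩
    exact ⟨m, hm⟩
  · classical
    let Λ : ℝ × ℝ → ℝ := fun p => if h : ∃ lam : ℝ, G p.2 lam = p.1 then h.choose else 0
    have hΛ : ∀ p ∈ {p : ℝ × ℝ | ∃ lam : ℝ, G p.2 lam = p.1}, G p.2 (Λ p) = p.1 := by
      intro p hp
      have hp' : ∃ lam : ℝ, G p.2 lam = p.1 := hp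
      simp only [Λ, dif_pos hp']
      exact hp'.choose_spec
    refine ⟨Λ, ?_, hΛ⟩
    intro p hp
    apply ContinuousAt.continuousWithinAt
    rw [Metric.continuousAt_iff']
    intro ε hε
    filter_upwards [key p (Λ p) (hΛ p hp) ε hε] with q ⟨m, h1, h2⟩
    have : Λ q = m := (hm q.2).injective ((hΛ q ⟨m, h2⟩).trans h2.symm)
    rw [this, Real.dist_eq]
    exact h1

/-- On `D = {(β,α) : β = φ(-1,α,λ) for some λ}` the coupling constant `λ(β,α)` is
uniquely determined, `D` is open, and `λ(·,·)` is continuous on `D`. -/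
theorem coupling_constant_unique_open_continuous (g f : ℝ → ℝ)
    (hgm : Measurable g) (hgb : ∃ Cg : ℝ, ∀ x : ℝ, |g x| ≤ Cg)
    (hfm : Measurable f) (c C : ℝ) (hc : 0 < c) (hcC : c ≤ C)
    (a b : ℝ) (ha : -1 ≤ a) (hab : a < b) (hb : b ≤ 0)
    (hfl : ∀ x : ℝ, Set.indicator (Set.Icc a b) (fun _ => c) x ≤ f x)
    (hfu : ∀ x : ℝ, f x ≤ Set.indicator (Set.Icc (-1 : ℝ) 0) (fun _ => C) x)
    (u v R φ : ℝ → ℝ → ℝ → ℝ)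
    (hu : ∀ (α lam : ℝ) (x : ℝ), HasDerivAt (fun s => u s α lam) (v x α lam) x)
    (hv : ∀ (α lam : ℝ) (x y : ℝ),
      v x α lam = v y α lam + ∫ t in y..x, (g t + lam * f t) * u t α lam)
    (hu0 : ∀ α lam : ℝ, u 0 α lam = Real.sin α)
    (hv0 : ∀ α lam : ℝ, v 0 α lam = Real.cos α)
    (hR : ∀ x α lam : ℝ, 0 < R x α lam)
    (huR : ∀ x α lam : ℝ, u x α lam = R x α lam * Real.sin (φ x α lam))
    (hvR : ∀ x α lam : ℝ, v x α lam = R x α lam * Real.cos (φ x α lam))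
    (hφ0 : ∀ α lam : ℝ, φ 0 α lam = α)
    (hφcont : Continuous fun p : ℝ × ℝ × ℝ => φ p.1 p.2.1 p.2.2) :
    (∀ p : ℝ × ℝ, p ∈ {p : ℝ × ℝ | ∃ lam : ℝ, φ (-1) p.2 lam = p.1} →
      ∃! lam : ℝ, φ (-1) p.2 lam = p.1) ∧
    IsOpen {p : ℝ × ℝ | ∃ lam : ℝ, φ (-1) p.2 lam = p.1} ∧
    ∃ Λ : ℝ × ℝ → ℝ,
      ContinuousOn Λ {p : ℝ × ℝ | ∃ lam : ℝ, φ (-1) p.2 lam = p.1} ∧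
      ∀ p ∈ {p : ℝ × ℝ | ∃ lam : ℝ, φ (-1) p.2 lam = p.1},
        φ (-1) p.2 (Λ p) = p.1 := by
  obtain ⟨Cg, hCg⟩ := hgb
  have hC : 0 < C := hc.trans_le hcC
  have hf0 : ∀ x, 0 ≤ f x := fun x =>
    (Set.indicator_nonneg (fun _ _ => hc.le) x).trans (hfl x)
  have hfC : ∀ x, f x ≤ C := fun x =>
    (hfu x).trans (Set.indicator_le_self' (fun _ _ => hC.le) x)
  have hfabs : ∀ x, |f x| ≤ C := fun x => by rw [abs_of_nonneg (hf0 x)]; exact hfC x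
  have hCg0 : 0 ≤ Cg := (abs_nonneg _).trans (hCg 0)
  have huc : ∀ α l, Continuous fun x => u x α l := fun α l =>
    continuous_iff_continuousAt.2 fun x => (hu α l x).continuousAt
  -- multiplying continuous functions by bounded measurable ones
  have hloc : ∀ (q y : ℝ → ℝ) (B : ℝ), Measurable q → (∀ x, |q x| ≤ B) → Continuous y →
      LocallyIntegrable (fun t => q t * y t) volume := by
    intro q y B hq hB hy
    have hB0 : 0 ≤ B := (abs_nonneg _).trans (hB 0)
    refine (continuous_const.mul hy.norm :
      Continuous fun t => B * ‖y t‖).locallyIntegrable.mono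
        (hq.mul hy.measurable).aestronglyMeasurable ?_
    filter_upwards with t
    change ‖q t * y t‖ ≤ ‖B * ‖y t‖‖
    rw [norm_mul, norm_mul, norm_norm, Real.norm_of_nonneg hB0]
    gcongr
    exact hB t
  have hqm : ∀ l, Measurable fun t => g t + l * f t := fun l => hgm.add (hfm.const_mul l)
  have hqb : ∀ l t, |g t + l * f t| ≤ Cg + |l| * C := by
    intro l t
    refine (abs_add_le _ _).trans (add_le_add (hCg t) ?_)
    rw [abs_mul]
    exact mul_le_mul_of_nonneg_left (hfabs t) (abs_nonneg _)
  have hquL : ∀ α l, LocallyIntegrable (fun t => (g t + l * f t) * u t α l) volume :=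
    fun α l => hloc _ _ _ (hqm l) (hqb l) (huc α l)
  have hii : ∀ {h : ℝ → ℝ}, LocallyIntegrable h volume → ∀ x y, IntervalIntegrable h volume x y :=
    fun hh x y => intervalIntegrable_iff.mpr <|
      (hh.integrableOn_isCompact isCompact_uIcc).mono_set Set.uIoc_subset_uIcc
  have hvac := fun α l => cc_ac (fun x => v x α l) _ (hquL α l) (fun x => hv α l x 0)
  have hvc : ∀ α l, Continuous fun x => v x α l := by
    intro α l
    have := intervalIntegral.continuous_primitive (hii (hquL α l)) 0
    have e : (fun x => v x α l) = fun x => v 0 α l +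
      ∫ t in (0:ℝ)..x, (g t + l * f t) * u t α l := funext fun x => hv α l x 0
    rw [e]
    exact continuous_const.add this
  have huac := fun α l => cc_ac (fun x => u x α l) _ (hvc α l).locallyIntegrable (fun x => by
    rw [intervalIntegral.integral_eq_sub_of_hasDerivAt (fun t _ => hu α l t)
      ((hvc α l).intervalIntegrable _ _)]
    ring)
  -- Wronskian identity
  have hW : ∀ α l m, u (-1) α l * v (-1) α m - u (-1) α m * v (-1) α l =
      - ((m - l) * ∫ t in (-1:ℝ)..0, f t * (u t α l * u t α m)) := by
    intro α l m
    have hac := ((huac α l).1.fun_mul (hvac α m).1).sub ((huac α m).1.fun_mul (hvac α l).1)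
    have h1 := hac.integral_deriv_eq_sub
    have h2 : ∫ t in (-1:ℝ)..0, deriv ((fun x => u x α l * v x α m) -
        (fun x => u x α m * v x α l)) t =
        ∫ t in (-1:ℝ)..0, (m - l) * (f t * (u t α l * u t α m)) := by
      apply intervalIntegral.integral_congr_ae
      filter_upwards [(hvac α l).2, (hvac α m).2] with x hl hm _
      refine (((hu α l x).mul hm).sub ((hu α m x).mul hl)).deriv.trans ?_
      ring
    rw [h2, intervalIntegral.integral_const_mul] at h1
    simp only [Pi.sub_apply, hu0, hv0] at h1
    rw [h1]; ring
  have hG2 : Continuous fun p : ℝ × ℝ => φ (-1) p.1 p.2 :=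
    hφcont.comp (continuous_const.prodMk (continuous_fst.prodMk continuous_snd) :
      Continuous fun p : ℝ × ℝ => ((-1 : ℝ), p.1, p.2))
  apply cc_top (fun α l => φ (-1) α l) hG2
  intro α
  have hGc : Continuous fun l => φ (-1) α l :=
    hG2.comp (continuous_const.prodMk continuous_id : Continuous fun l : ℝ => (α, l))
  apply cc_mono _ hGc
  intro l
  -- positivity of the unperturbed integral
  have hpos : 0 < ∫ t in (-1:ℝ)..0, f t * (u t α l * u t α l) := by
    have p1 : 0 < ∫ t in a..b, c * (u t α l * u t α l) := by
      apply intervalIntegral.integral_pos hab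
      · have := huc α l
        fun_prop
      · intro x _
        exact mul_nonneg hc.le (mul_self_nonneg _)
      · by_contra hcon
        push Not at hcon
        have hz : ∀ x ∈ Set.Icc a b, u x α l = 0 := by
          intro x hx
          have := hcon x hx
          have h3 := mul_self_nonneg (u x α l)
          exact mul_self_eq_zero.1 (le_antisymm (by nlinarith) h3)
        have hmid : (a + b) / 2 ∈ Set.Ioo a b := ⟨by linarith, by linarith⟩
        have hd : HasDerivAt (fun s => u s α l) 0 ((a + b) / 2) := by
          apply (hasDerivAt_const ((a + b) / 2) (0:ℝ)).congr_of_eventuallyEq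
          filter_upwards [Ioo_mem_nhds hmid.1 hmid.2] with x hx
          exact hz x (Set.Ioo_subset_Icc_self hx)
        have hv' := (hu α l _).unique hd
        have hu' := hz _ (Set.Ioo_subset_Icc_self hmid)
        rw [hvR] at hv'
        rw [huR] at hu'
        have hRp := (hR ((a + b) / 2) α l).ne'
        have s1 := (mul_eq_zero.1 hv').resolve_left hRp
        have s2 := (mul_eq_zero.1 hu').resolve_left hRp
        have := Real.sin_sq_add_cos_sq (φ ((a + b) / 2) α l)
        rw [s1, s2] at this
        norm_num at this
    have hL := hii (hloc f (fun t => u t α l * u t α l) C hfm hfabs ((huc α l).mul (huc α l)))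
    have p2 : ∫ t in a..b, c * (u t α l * u t α l) ≤ ∫ t in a..b, f t * (u t α l * u t α l) := by
      apply intervalIntegral.integral_mono_on hab.le
      · exact (continuous_const.mul ((huc α l).mul (huc α l))).intervalIntegrable _ _
      · exact hL _ _
      · intro x hx
        apply mul_le_mul_of_nonneg_right _ (mul_self_nonneg _)
        have := hfl x
        rwa [Set.indicator_of_mem hx] at this
    have p3 : ∫ t in a..b, f t * (u t α l * u t α l) ≤
        ∫ t in (-1:ℝ)..0, f t * (u t α l * u t α l) := by
      apply intervalIntegral.integral_mono_interval ha hab.le hb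
      · filter_upwards with t
        exact mul_nonneg (hf0 t) (mul_self_nonneg _)
      · exact hL _ _
    linarith
  obtain ⟨M, hM⟩ := (isCompact_Icc (a := (-1:ℝ)) (b := 0)).exists_bound_of_continuousOn
    (huc α l).continuousOn
  have hM0 : 0 ≤ M := (norm_nonneg _).trans (hM 0 (by simp))
  set K := Cg + (|l| + 1) * C with hKdef
  have hK0 : 0 ≤ K := by positivity
  -- continuous dependence on the coupling constant
  have hdep : ∀ m, l < m → m < l + 1 → ∀ x ∈ Set.Icc (-1:ℝ) 0,
      |u x α m - u x α l| ≤ ((m - l) * (C * M)) * Real.exp (K + 1) := by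
    intro m hlm hm1
    have hml : 0 < m - l := by linarith
    refine cc_sol (fun x => u x α m - u x α l) (fun x => v x α m - v x α l)
      (fun t => (g t + m * f t) * u t α m - (g t + l * f t) * u t α l) K ((m - l) * (C * M))
      hK0 (by positivity) (fun x => (hu α m x).sub (hu α l x)) ((hvc α m).sub (hvc α l))
      (by simp [hu0]) ?_ ?_
    · intro x
      rw [intervalIntegral.integral_sub (hii (hquL α m) _ _) (hii (hquL α l) _ _)]
      rw [hv α m x 0, hv α l x 0, hv0, hv0]
      ring
    · intro t ht
      have e : (g t + m * f t) * u t α m - (g t + l * f t) * u t α l =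
        (g t + m * f t) * (u t α m - u t α l) + (m - l) * (f t * u t α l) := by ring
      rw [e]
      refine (abs_add_le _ _).trans (add_le_add ?_ ?_)
      · rw [abs_mul]
        apply mul_le_mul_of_nonneg_right _ (abs_nonneg _)
        refine (hqb m t).trans ?_
        have : |m| ≤ |l| + 1 := by
          have h4 := abs_add_le l (m - l)
          rw [abs_of_pos hml] at h4
          have h5 : l + (m - l) = m := by ring
          rw [h5] at h4
          linarith
        rw [hKdef]
        gcongr
      · rw [abs_mul, abs_mul, abs_of_pos hml]
        have h6 : |u t α l| ≤ M := hM t ht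
        have h7 := hfabs t
        gcongr
  set J := ∫ t in (-1:ℝ)..0, f t * (u t α l * u t α l) with hJ
  set B := C * (M * ((C * M) * Real.exp (K + 1))) with hB
  have hB0 : 0 ≤ B := by positivity
  have hpos2 : ∀ m, l < m → m < l + 1 → m < l + J / (B + 1) →
      0 < ∫ t in (-1:ℝ)..0, f t * (u t α l * u t α m) := by
    intro m hlm hm1 hm2
    have i1 := hii (hloc f (fun t => u t α l * u t α m) C hfm hfabs
      ((huc α l).mul (huc α m))) (-1) 0
    have i2 := hii (hloc f (fun t => u t α l * u t α l) C hfm hfabs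
      ((huc α l).mul (huc α l))) (-1) 0
    have hd : |(∫ t in (-1:ℝ)..0, f t * (u t α l * u t α m)) - J| ≤ (m - l) * B := by
      rw [hJ, ← intervalIntegral.integral_sub i1 i2, ← Real.norm_eq_abs]
      have := intervalIntegral.norm_integral_le_of_norm_le_const (a := (-1:ℝ)) (b := 0)
        (C := (m - l) * B)
        (f := fun t => f t * (u t α l * u t α m) - f t * (u t α l * u t α l)) (by
          intro t ht
          rw [Set.uIoc_of_le (by norm_num)] at ht
          have ht' : t ∈ Set.Icc (-1:ℝ) 0 := ⟨ht.1.le, ht.2⟩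
          have e : f t * (u t α l * u t α m) - f t * (u t α l * u t α l) =
            f t * (u t α l * (u t α m - u t α l)) := by ring
          rw [e, Real.norm_eq_abs, abs_mul, abs_mul]
          have h6 : |u t α l| ≤ M := hM t ht'
          have h7 := hfabs t
          have h8 := hdep m hlm hm1 t ht'
          calc |f t| * (|u t α l| * |u t α m - u t α l|)
              ≤ C * (M * (((m - l) * (C * M)) * Real.exp (K + 1))) := by gcongr
            _ = (m - l) * B := by rw [hB]; ring)
      simpa using this
    have h9 : (m - l) * (B + 1) < J := by
      rw [← lt_div_iff₀ (by linarith)]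
      linarith
    have h10 := (abs_le.1 hd).1
    nlinarith
  obtain ⟨η, hη, hηφ⟩ := Metric.continuousAt_iff.1 (hGc.continuousAt (x := l)) Real.pi Real.pi_pos
  refine ⟨min η (min 1 (J / (B + 1))), by positivity, ?_⟩
  intro m hlm hm
  have m1 : m < l + η := hm.trans_le (by gcongr; exact min_le_left _ _)
  have m2 : m < l + 1 := hm.trans_le (by
    gcongr; exact (min_le_right _ _).trans (min_le_left _ _))
  have m3 : m < l + J / (B + 1) := hm.trans_le (by
    gcongr; exact (min_le_right _ _).trans (min_le_right _ _))
  have hp := hpos2 m hlm m2 m3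
  have hw := hW α l m
  rw [huR, huR, hvR, hvR] at hw
  have hs : R (-1) α l * R (-1) α m * Real.sin (φ (-1) α l - φ (-1) α m) < 0 := by
    rw [Real.sin_sub]
    have : 0 < (m - l) * ∫ t in (-1:ℝ)..0, f t * (u t α l * u t α m) :=
      mul_pos (by linarith) hp
    linarith
  have hdist := hηφ (x := m) (by rw [Real.dist_eq, abs_of_pos (by linarith)]; linarith)
  rw [Real.dist_eq, abs_lt] at hdist
  by_contra hcon
  have hcon' : φ (-1) α m ≤ φ (-1) α l := not_lt.1 hcon
  have := Real.sin_nonneg_of_nonneg_of_le_pi (x := φ (-1) α l - φ (-1) α m)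
    (by linarith) (by linarith [hdist.1])
  have := mul_nonneg (mul_pos (hR (-1) α l) (hR (-1) α m)).le this
  linarith
end
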